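/- Let Ω be a bounded domain in ℂⁿ, p ∈ Ω, and suppose there exist vectors ζ₁, ζ₂ in the Kobayashi indicatrix D_Ω(p) and ε > 0 with ε(ζ₁+ζ₂) ∉ D_Ω(p). Then s_Ω(p) ≤ 3ε. -/

import Mathlib

open Metric Set

noncomputable def kobayashi {E : Type*} [NormedAddCommGroup E] [NormedSpace ℂ E]
    (Ω : Set E) (p ζ : E) : ℝ :=
  sInf {α : ℝ | 0 < α ∧ ∃ φ : ℂ → E, DifferentiableOn ℂ φ (Metric.ball 0 1) ∧
    (∀ τ ∈ Metric.ball (0 : ℂ) 1, φ τ ∈ Ω) ∧ φ 0 = p ∧ α • deriv φ 0 = ζ}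

noncomputable def indicatrix {E : Type*} [NormedAddCommGroup E] [NormedSpace ℂ E]
    (Ω : Set E) (p : E) : Set E :=
  {ζ | kobayashi Ω p ζ < 1}

noncomputable def squeezing {E : Type*} [NormedAddCommGroup E] [NormedSpace ℂ E]
    (Ω : Set E) (p : E) : ℝ :=
  sSup {r : ℝ | 0 < r ∧ ∃ f : E → E, DifferentiableOn ℂ f Ω ∧ Set.InjOn f Ω ∧
    f p = 0 ∧ f '' Ω ⊆ Metric.ball 0 1 ∧ Metric.ball 0 r ⊆ f '' Ω}

section

open Filter Topology

theorem continuousOn_fderiv_of_differentiableOn {E F : Type*} [NormedAddCommGroup E]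
    [NormedSpace ℂ E] [NormedAddCommGroup F] [NormedSpace ℂ F] {f : E → F} {U : Set E}
    (hf : DifferentiableOn ℂ f U) (hU : IsOpen U) : ContinuousOn (fderiv ℂ f) U := by
  intro x₀ hx₀
  apply ContinuousAt.continuousWithinAt
  have hcont : ContinuousAt f x₀ := (hf.differentiableAt (hU.mem_nhds hx₀)).continuousAt
  obtain ⟨R, hR, hRU⟩ := Metric.mem_nhds_iff.1 (Filter.inter_mem (hU.mem_nhds hx₀)
    (hcont.preimage_mem_nhds (closedBall_mem_nhds (f x₀) one_pos)))
  set r := R / 4 with hr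
  have hr0 : 0 < r := by positivity
  have lip : ∀ x ∈ ball x₀ r, ∀ y ∈ ball x₀ r, dist (f y) (f x) ≤ 2 / (3 * r) * dist y x := by
    intro x hx y hy
    rw [mem_ball] at hx hy
    have hsub : ball x (3 * r) ⊆ ball x₀ R := ball_subset_ball' (by linarith)
    apply Complex.dist_le_div_mul_dist_of_mapsTo_ball
      (hf.mono fun z hz => (hRU (hsub hz)).1)
    · intro z hz
      have h1 : dist (f z) (f x₀) ≤ 1 := (hRU (hsub hz)).2
      have h2 : dist (f x) (f x₀) ≤ 1 :=
        (hRU (hsub (mem_ball_self (by positivity)))).2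
      rw [mem_closedBall]
      linarith [dist_triangle_right (f z) (f x) (f x₀)]
    · rw [mem_ball]
      linarith [dist_triangle_right y x x₀]
  have key : ∀ y ∈ ball x₀ (r / 2),
      dist (fderiv ℂ f y) (fderiv ℂ f x₀) ≤ (2 * (2 / (3 * r) * dist y x₀)) / (r / 2) := by
    intro y hy
    rw [mem_ball] at hy
    have hmem : ∀ z ∈ ball x₀ (r / 2), z ∈ ball x₀ r ∧ z + (y - x₀) ∈ ball x₀ r := by
      intro z hz
      rw [mem_ball] at hz
      refine ⟨mem_ball.2 (by linarith), ?_⟩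
      rw [mem_ball, dist_eq_norm]
      rw [dist_eq_norm] at hz hy
      calc ‖z + (y - x₀) - x₀‖ = ‖(z - x₀) + (y - x₀)‖ := by congr 1; abel
        _ ≤ _ := norm_add_le _ _
        _ < r := by linarith
    have hdiff : ∀ z ∈ ball x₀ r, DifferentiableAt ℂ f z := fun z hz =>
      hf.differentiableAt (hU.mem_nhds (hRU (ball_subset_ball (by linarith) hz)).1)
    have hder : fderiv ℂ (fun z => f (z + (y - x₀)) - f z) x₀ = fderiv ℂ f y - fderiv ℂ f x₀ := by
      have h1 : DifferentiableAt ℂ (fun z => f (z + (y - x₀))) x₀ := by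
        rw [differentiableAt_comp_add_right]
        exact hdiff _ (hmem x₀ (mem_ball_self (by positivity))).2
      rw [fderiv_fun_sub h1 (hdiff _ (mem_ball_self hr0)), fderiv_comp_add_right]
      congr 2
      abel
    rw [dist_eq_norm, ← hder]
    apply Complex.norm_fderiv_le_div_of_mapsTo_ball _ _ (by positivity)
    · intro z hz
      apply DifferentiableAt.differentiableWithinAt
      apply DifferentiableAt.sub _ (hdiff _ (hmem z hz).1)
      rw [differentiableAt_comp_add_right]
      exact hdiff _ (hmem z hz).2
    · intro z hz
      have hb : ∀ w ∈ ball x₀ (r / 2), ‖f (w + (y - x₀)) - f w‖ ≤ 2 / (3 * r) * dist y x₀ := by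
        intro w hw
        rw [← dist_eq_norm]
        refine (lip _ (hmem w hw).1 _ (hmem w hw).2).trans_eq ?_
        rw [dist_eq_norm, dist_eq_norm]
        congr 2
        abel
      rw [mem_closedBall, dist_eq_norm]
      refine (norm_sub_le _ _).trans ?_
      linarith [hb z hz, hb x₀ (mem_ball_self (by positivity))]
  rw [ContinuousAt, tendsto_iff_dist_tendsto_zero]
  refine squeeze_zero' (Filter.Eventually.of_forall fun _ => dist_nonneg)
    (Filter.eventually_of_mem (ball_mem_nhds x₀ (by positivity : 0 < r / 2)) key) ?_
  have : ContinuousAt (fun y => (2 * (2 / (3 * r) * dist y x₀)) / (r / 2)) x₀ := by fun_prop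
  simpa [ContinuousAt] using this

theorem differentiableOn_fderiv_apply {E F : Type*} [NormedAddCommGroup E]
    [NormedSpace ℂ E] [NormedAddCommGroup F] [NormedSpace ℂ F] [CompleteSpace F]
    {f : E → F} {U : Set E} (hf : DifferentiableOn ℂ f U) (hU : IsOpen U) (v : E) :
    DifferentiableOn ℂ (fun x => fderiv ℂ f x v) U := by
  intro x₀ hx₀
  apply DifferentiableAt.differentiableWithinAt
  have hc' : ContinuousOn (fderiv ℂ f) U := continuousOn_fderiv_of_differentiableOn hf hU
  obtain ⟨R, hR, hRU⟩ := Metric.mem_nhds_iff.1 (Filter.inter_mem (hU.mem_nhds hx₀)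
    ((hc'.continuousAt (hU.mem_nhds hx₀)).preimage_mem_nhds
      (closedBall_mem_nhds (fderiv ℂ f x₀) one_pos)))
  set K := ‖fderiv ℂ f x₀‖ + 1 with hK
  have hbound : ∀ x ∈ ball x₀ R, ‖fderiv ℂ f x‖ ≤ K := by
    intro x hx
    have h1 : dist (fderiv ℂ f x) (fderiv ℂ f x₀) ≤ 1 := (hRU hx).2
    rw [dist_eq_norm] at h1
    linarith [norm_sub_norm_le (fderiv ℂ f x) (fderiv ℂ f x₀)]
  obtain ⟨ρ, hρ, hρv⟩ : ∃ ρ : ℝ, 0 < ρ ∧ ρ * ‖v‖ < R / 2 := by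
    refine ⟨R / 2 / (‖v‖ + 1), by positivity, ?_⟩
    rw [div_mul_eq_mul_div, div_lt_iff₀ (by positivity)]
    nlinarith [norm_nonneg v]
  have hmem : ∀ x ∈ ball x₀ (R / 2), ∀ ζ ∈ closedBall (0 : ℂ) ρ, x + ζ • v ∈ ball x₀ R := by
    intro x hx ζ hζ
    rw [mem_ball, dist_eq_norm] at hx ⊢
    rw [mem_closedBall_zero_iff] at hζ
    calc ‖x + ζ • v - x₀‖ = ‖(x - x₀) + ζ • v‖ := by congr 1; abel
      _ ≤ ‖x - x₀‖ + ‖ζ‖ * ‖v‖ := (norm_add_le _ _).trans_eq (by rw [norm_smul])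
      _ < R := by nlinarith [norm_nonneg v]
  have hdiff : ∀ x ∈ ball x₀ R, DifferentiableAt ℂ f x := fun x hx =>
    hf.differentiableAt (hU.mem_nhds (hRU hx).1)
  set c : ℝ → ℂ := fun θ => deriv (circleMap 0 ρ) θ * (1 / (circleMap 0 ρ θ - 0) ^ 2) with hc
  have hcc : Continuous c := by
    simp only [hc, deriv_circleMap]
    refine Continuous.mul (by fun_prop) (Continuous.div (by fun_prop) (by fun_prop) fun θ => ?_)
    simpa using hρ.ne'
  have hcirc : ∀ θ, circleMap 0 ρ θ ∈ closedBall (0 : ℂ) ρ := fun θ =>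
    circleMap_mem_closedBall 0 hρ.le θ
  set μ := MeasureTheory.volume.restrict (Icc (0 : ℝ) (2 * Real.pi)) with hμ
  have hFcont : ∀ x ∈ ball x₀ (R / 2),
      Continuous fun θ => c θ • f (x + circleMap 0 ρ θ • v) := by
    intro x hx
    refine hcc.smul ?_
    rw [continuous_iff_continuousAt]
    intro θ
    exact ContinuousAt.comp (f := fun θ => x + circleMap 0 ρ θ • v)
      (hdiff _ (hmem x hx _ (hcirc θ))).continuousAt (by fun_prop)
  have hF'cont : Continuous fun θ => c θ • fderiv ℂ f (x₀ + circleMap 0 ρ θ • v) := by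
    refine hcc.smul ?_
    rw [continuous_iff_continuousAt]
    intro θ
    exact ContinuousAt.comp (f := fun θ => x₀ + circleMap 0 ρ θ • v)
      (hc'.continuousAt (hU.mem_nhds (hRU (hmem x₀ (mem_ball_self (by positivity)) _ (hcirc θ))).1))
      (by fun_prop)
  have hderivInt := hasFDerivAt_integral_of_dominated_of_fderiv_le (𝕜 := ℂ) (μ := μ)
    (F := fun x θ => c θ • f (x + circleMap 0 ρ θ • v))
    (F' := fun x θ => c θ • fderiv ℂ f (x + circleMap 0 ρ θ • v))
    (x₀ := x₀) (bound := fun θ => ‖c θ‖ * K) (ball_mem_nhds x₀ (half_pos hR))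
    (Filter.eventually_of_mem (ball_mem_nhds x₀ (half_pos hR)) fun x hx =>
      (hFcont x hx).aestronglyMeasurable)
    ((hFcont x₀ (mem_ball_self (half_pos hR))).continuousOn.integrableOn_Icc)
    hF'cont.aestronglyMeasurable
    (Filter.Eventually.of_forall fun θ x hx => by
      rw [norm_smul]
      exact mul_le_mul_of_nonneg_left (hbound _ (hmem x hx _ (hcirc θ))) (norm_nonneg _))
    ((hcc.norm.mul continuous_const).continuousOn.integrableOn_Icc)
    (Filter.Eventually.of_forall fun θ x hx => by
      have h1 := (hdiff _ (hmem x hx _ (hcirc θ))).hasFDerivAt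
      exact ((hasFDerivAt_comp_add_right _).2 h1).const_smul (c θ))
  refine ((hderivInt.differentiableAt.const_smul ((2 * Real.pi * Complex.I : ℂ)⁻¹))).congr_of_eventuallyEq
    (Filter.eventually_of_mem (ball_mem_nhds x₀ (half_pos hR)) fun x hx => ?_)
  have hline : ∀ ζ ∈ closedBall (0 : ℂ) ρ,
      HasDerivAt (fun ζ : ℂ => f (x + ζ • v)) (fderiv ℂ f (x + ζ • v) v) ζ := by
    intro ζ hζ
    have h1 := (hdiff _ (hmem x hx ζ hζ)).hasFDerivAt
    have h2 : HasDerivAt (fun ζ : ℂ => x + ζ • v) v ζ := by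
      simpa using ((hasDerivAt_id ζ).smul_const v).const_add x
    exact h1.comp_hasDerivAt ζ h2
  have hC := DifferentiableOn.deriv_eq_smul_circleIntegral (f := fun ζ : ℂ => f (x + ζ • v)) hρ
    (fun ζ hζ => (hline ζ hζ).differentiableAt.differentiableWithinAt)
  rw [(hline 0 (mem_closedBall_self hρ.le)).deriv, circleIntegral_def_Icc] at hC
  simp only [zero_smul, add_zero, smul_smul] at hC
  simp only [Pi.smul_apply, hc, hμ]
  rw [hC, smul_smul, inv_mul_cancel₀ Complex.two_pi_I_ne_zero, one_smul]

theorem contDiffOn_of_differentiableOn_complex {E F : Type*} [NormedAddCommGroup E]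
    [NormedSpace ℂ E] [FiniteDimensional ℂ E] [NormedAddCommGroup F] [NormedSpace ℂ F]
    [CompleteSpace F] {f : E → F} {U : Set E} (hf : DifferentiableOn ℂ f U) (hU : IsOpen U)
    (n : ℕ) : ContDiffOn ℂ n f U := by
  induction n generalizing f with
  | zero => exact contDiffOn_zero.2 hf.continuousOn
  | succ n ih =>
    push_cast
    rw [contDiffOn_succ_iff_fderiv_of_isOpen hU]
    refine ⟨hf, by simp, contDiffOn_clm_apply.2 fun v => ?_⟩
    exact ih (differentiableOn_fderiv_apply hf hU v)

theorem deriv_ne_zero_of_injOn_complex {f : ℂ → ℂ} {U : Set ℂ} (hf : DifferentiableOn ℂ f U)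
    (hU : IsOpen U) (hinj : InjOn f U) {x : ℂ} (hx : x ∈ U) : deriv f x ≠ 0 := by
  intro h0
  have han : ∀ z ∈ U, AnalyticAt ℂ f z := fun z hz => hf.analyticAt (hU.mem_nhds hz)
  have nonconst : ∀ z ∈ U, ¬ ∀ᶠ w in 𝓝 z, f w = f z := by
    intro z hz h
    have h1 : ∀ᶠ w in 𝓝 z, w = z := by
      filter_upwards [h, hU.mem_nhds hz] with w hw hwU using hinj hwU hz hw
    have h2 : ∀ᶠ w in 𝓝[≠] z, False := by
      filter_upwards [h1.filter_mono nhdsWithin_le_nhds, self_mem_nhdsWithin] with w hw hne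
      exact hne hw
    exact (h2.exists).elim fun _ h => h
  have hopen : ∀ z ∈ U, 𝓝 (f z) ≤ map f (𝓝 z) := fun z hz =>
    (han z hz).eventually_constant_or_nhds_le_map_nhds.resolve_left (nonconst z hz)
  set g := Function.invFunOn f U with hg
  have hgf : ∀ z ∈ U, g (f z) = z := fun z hz => hinj.leftInvOn_invFunOn hz
  have hgc : ∀ z ∈ U, ContinuousAt g (f z) := by
    intro z hz
    have h1 : Tendsto g (map f (𝓝 z)) (𝓝 z) := by
      rw [tendsto_map'_iff]
      refine tendsto_id.congr' ?_
      filter_upwards [hU.mem_nhds hz] with w hw using (hgf w hw).symm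
    rw [ContinuousAt, hgf z hz]
    exact h1.mono_left (hopen z hz)
  have hfg : ∀ z ∈ U, ∀ᶠ y in 𝓝 (f z), f (g y) = y := by
    intro z hz
    refine hopen z hz ?_
    rw [mem_map]
    filter_upwards [hU.mem_nhds hz] with w hw
    simp [hgf w hw]
  have hd : ∀ᶠ z in 𝓝[≠] x, deriv f z ≠ 0 := by
    refine (han x hx).deriv.eventually_eq_zero_or_eventually_ne_zero.resolve_left fun h => ?_
    obtain ⟨r, hr, hrU⟩ := Metric.mem_nhds_iff.1 (Filter.inter_mem h (hU.mem_nhds hx))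
    refine nonconst x hx (Filter.eventually_of_mem (ball_mem_nhds x hr) fun w hw => ?_)
    exact isOpen_ball.is_const_of_deriv_eq_zero (convex_ball x r).isPreconnected
      (hf.mono fun z hz => (hrU hz).2) (fun z hz => (hrU hz).1) hw (mem_ball_self hr)
  have hgan : AnalyticAt ℂ g (f x) := by
    refine Complex.analyticAt_of_differentiable_on_punctured_nhds_of_continuousAt ?_ (hgc x hx)
    have hd' : ∀ᶠ z in 𝓝 x, z ∈ U ∧ (z ≠ x → deriv f z ≠ 0) :=
      (hU.eventually_mem hx).and (eventually_nhdsWithin_iff.1 hd)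
    have h1 : ∀ᶠ y in 𝓝 (f x), y ≠ f x → DifferentiableAt ℂ g y := by
      refine hopen x hx ?_
      rw [mem_map]
      filter_upwards [hd'] with z hz hne
      have hzx : z ≠ x := fun h => hne (by rw [h])
      have hder : HasDerivAt f (deriv f z) (g (f z)) := by
        rw [hgf z hz.1]
        exact (han z hz.1).differentiableAt.hasDerivAt
      exact (hder.of_local_left_inverse (hgc z hz.1) (hz.2 hzx) (hfg z hz.1)).differentiableAt
    exact eventually_nhdsWithin_iff.2 h1
  have h1 : HasDerivAt (g ∘ f) (deriv g (f x) * deriv f x) x :=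
    hgan.differentiableAt.hasDerivAt.comp x (han x hx).differentiableAt.hasDerivAt
  have h2 : HasDerivAt (g ∘ f) 1 x := by
    refine (hasDerivAt_id x).congr_of_eventuallyEq ?_
    filter_upwards [hU.mem_nhds hx] with w hw using hgf w hw
  have := h1.unique h2
  simp [h0] at this

theorem eventually_exists_zero_of_continuous_family {g : ℂ → ℂ → ℂ} {r : ℝ} (hr : 0 < r)
    (hd : ∀ᶠ s in 𝓝 (0 : ℂ), DiffContOnCl ℂ (g s) (ball 0 r))
    (hc : ∀ t ∈ closedBall (0 : ℂ) r, ContinuousAt (fun z : ℂ × ℂ => g z.1 z.2) (0, t))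
    (h0 : g 0 0 = 0) (hne : ∀ t ∈ sphere (0 : ℂ) r, g 0 t ≠ 0) :
    ∀ᶠ s in 𝓝 (0 : ℂ), ∃ t ∈ closedBall (0 : ℂ) r, g s t = 0 := by
  have hc0 : ∀ t ∈ closedBall (0 : ℂ) r, ContinuousAt (g 0) t := fun t ht =>
    ContinuousAt.comp (f := fun t : ℂ => ((0 : ℂ), t)) (hc t ht) (by fun_prop)
  obtain ⟨t₀, ht₀, hmin⟩ := (isCompact_sphere (0 : ℂ) r).exists_isMinOn
    (NormedSpace.sphere_nonempty.2 hr.le) (f := fun t => ‖g 0 t‖)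
    (fun t ht => (hc0 t (sphere_subset_closedBall ht)).norm.continuousWithinAt)
  set m := ‖g 0 t₀‖ with hm
  have hm0 : 0 < m := norm_pos_iff.2 (hne t₀ ht₀)
  have hs : ∀ᶠ s in 𝓝 (0 : ℂ), ∀ t ∈ sphere (0 : ℂ) r, m / 2 < ‖g s t‖ := by
    refine (isCompact_sphere (0 : ℂ) r).eventually_forall_of_forall_eventually fun t ht => ?_
    have h1 : m / 2 < ‖g 0 t‖ := by
      have : m ≤ ‖g 0 t‖ := hmin ht
      linarith
    exact (hc t (sphere_subset_closedBall ht)).norm.eventually_const_lt h1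
  have hcent : ∀ᶠ s in 𝓝 (0 : ℂ), ‖g s 0‖ < m / 2 := by
    have h1 : ContinuousAt (fun s => ‖g s 0‖) 0 :=
      (ContinuousAt.comp (f := fun s : ℂ => (s, (0 : ℂ))) (hc 0 (mem_closedBall_self hr.le))
        (by fun_prop)).norm
    exact h1.eventually_lt_const (by simpa [h0] using half_pos hm0)
  filter_upwards [hd, hs, hcent] with s hd hs hcent
  by_contra! hcon
  have hcl : closure (ball (0 : ℂ) r) = closedBall 0 r := closure_ball 0 hr.ne'
  have hinv := hd.inv (fun t ht => hcon t (hcl ▸ ht))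
  have h1 := Complex.norm_le_of_forall_mem_frontier_norm_le (C := (m / 2)⁻¹) isBounded_ball hinv
    (fun t ht => by
      rw [frontier_ball 0 hr.ne'] at ht
      rw [Pi.inv_apply, norm_inv]
      exact inv_anti₀ (by positivity) (hs t ht).le)
    (subset_closure (mem_ball_self hr))
  rw [Pi.inv_apply, norm_inv] at h1
  have h2 : 0 < ‖g s 0‖ := norm_pos_iff.2 (hcon 0 (mem_closedBall_self hr.le))
  have := (inv_le_inv₀ h2 (by positivity)).1 h1
  linarith

theorem not_injOn_of_fderiv_eq_zero_on_zeros {E F : Type*} [NormedAddCommGroup E]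
    [NormedSpace ℂ E] [NormedAddCommGroup F] [NormedSpace ℂ F] {f : E → F} {J G : E → ℂ}
    {U : Set E} (hU : IsOpen U) (hf : DifferentiableOn ℂ f U) (hJ : DifferentiableOn ℂ J U)
    {q e v : E} (hq : q ∈ U) (hJq : J q = 0)
    (hJe : ¬ ∀ᶠ t in 𝓝 (0 : ℂ), J (q + t • e) = 0)
    (hJf : ∀ z ∈ U, J z = 0 → fderiv ℂ f z = 0) (hJG : ∀ z ∈ U, J z = 0 → G z = 0)
    {G' : E →L[ℂ] ℂ} (hG : HasStrictFDerivAt G G' q) (hGe : G' e ≠ 0)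
    (hv : ∀ t : ℂ, v ≠ t • e) : ¬ InjOn f U := by
  intro hinj
  have he : e ≠ 0 := by
    rintro rfl
    simp at hGe
  have he0 : 0 < ‖e‖ := norm_pos_iff.2 he
  set η := ‖G' e‖ / (2 * ‖e‖) with hη
  have hη0 : 0 < η := div_pos (norm_pos_iff.2 hGe) (by positivity)
  have hηe : η * ‖e‖ = ‖G' e‖ / 2 := by
    rw [hη]
    field_simp
  have hGe0 : 0 < ‖G' e‖ := norm_pos_iff.2 hGe
  obtain ⟨N, hN, hNG⟩ := hG.approximates_deriv_on_nhds (c := ⟨η, hη0.le⟩) (Or.inr hη0)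
  obtain ⟨δ, hδ, hδU⟩ := Metric.mem_nhds_iff.1 (Filter.inter_mem (hU.mem_nhds hq) hN)
  have hmem : ∀ s t : ℂ, ‖s‖ * ‖v‖ < δ / 2 → ‖t‖ * ‖e‖ < δ / 2 → q + s • v + t • e ∈ ball q δ := by
    intro s t hs ht
    rw [mem_ball, dist_eq_norm]
    calc ‖q + s • v + t • e - q‖ = ‖s • v + t • e‖ := by congr 1; abel
      _ ≤ ‖s‖ * ‖v‖ + ‖t‖ * ‖e‖ := (norm_add_le _ _).trans_eq (by rw [norm_smul, norm_smul])
      _ < δ := by linarith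
  set C := (‖G' v‖ + η * ‖v‖) / (‖G' e‖ / 2) with hC
  have hlip : ∀ s t s' t' : ℂ, q + s • v + t • e ∈ ball q δ → q + s' • v + t' • e ∈ ball q δ →
      J (q + s • v + t • e) = 0 → J (q + s' • v + t' • e) = 0 → ‖t - t'‖ ≤ C * ‖s - s'‖ := by
    intro s t s' t' hx hy hJx hJy
    have h1 := hNG _ (hδU hx).2 _ (hδU hy).2
    have hxy : q + s • v + t • e - (q + s' • v + t' • e) = (s - s') • v + (t - t') • e := by
      rw [sub_smul, sub_smul]
      abel
    rw [hJG _ (hδU hx).1 hJx, hJG _ (hδU hy).1 hJy, hxy, map_add, map_smul, map_smul] at h1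
    have h2 : ‖t - t'‖ * ‖G' e‖ - ‖s - s'‖ * ‖G' v‖ ≤
        ‖(0 : ℂ) - 0 - ((s - s') • G' v + (t - t') • G' e)‖ := by
      rw [sub_self, zero_sub, norm_neg, add_comm, ← norm_smul, ← norm_smul]
      exact norm_sub_le_norm_add _ _
    have h3 : ‖(s - s') • v + (t - t') • e‖ ≤ ‖s - s'‖ * ‖v‖ + ‖t - t'‖ * ‖e‖ :=
      (norm_add_le _ _).trans_eq (by rw [norm_smul, norm_smul])
    have h4 : ‖t - t'‖ * ‖G' e‖ - ‖s - s'‖ * ‖G' v‖ ≤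
        η * (‖s - s'‖ * ‖v‖ + ‖t - t'‖ * ‖e‖) :=
      h2.trans (h1.trans (mul_le_mul_of_nonneg_left h3 hη0.le))
    rw [hC, div_mul_eq_mul_div, le_div_iff₀ (by positivity)]
    have h5 : η * (‖t - t'‖ * ‖e‖) = ‖t - t'‖ * (‖G' e‖ / 2) := by rw [← hηe]; ring
    linarith
  have hr : ∃ r : ℝ, 0 < r ∧ r * ‖e‖ < δ / 2 ∧ ∀ t ∈ sphere (0 : ℂ) r, J (q + t • e) ≠ 0 := by
    have hnear : ∀ᶠ t in 𝓝 (0 : ℂ), q + t • e ∈ U :=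
      ContinuousAt.eventually_mem (by fun_prop) (hU.mem_nhds (by simpa using hq))
    have han : AnalyticAt ℂ (fun t : ℂ => J (q + t • e)) 0 := by
      rw [Complex.analyticAt_iff_eventually_differentiableAt]
      filter_upwards [hnear] with t ht
      exact DifferentiableAt.fun_comp' t (hJ.differentiableAt (hU.mem_nhds ht)) (by fun_prop)
    have h1 := eventually_nhdsWithin_iff.1
      (han.eventually_eq_zero_or_eventually_ne_zero.resolve_left hJe)
    obtain ⟨r₀, hr₀, hr₀'⟩ := Metric.eventually_nhds_iff_ball.1 h1
    obtain ⟨r, hr, hrlt⟩ := exists_between (lt_min hr₀ (show 0 < δ / 2 / ‖e‖ by positivity))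
    refine ⟨r, hr, (lt_div_iff₀ he0).1 (hrlt.trans_le (min_le_right _ _)), fun t ht => ?_⟩
    rw [mem_sphere_zero_iff_norm] at ht
    refine hr₀' t (by rw [mem_ball_zero_iff, ht]; exact hrlt.trans_le (min_le_left _ _)) ?_
    rintro rfl
    rw [norm_zero] at ht
    exact hr.ne ht
  obtain ⟨r, hr0, hre, hrne⟩ := hr
  have hsmall : ∀ᶠ s in 𝓝 (0 : ℂ), ‖s‖ * ‖v‖ < δ / 2 := by
    have h1 : ContinuousAt (fun s : ℂ => ‖s‖ * ‖v‖) 0 := by fun_prop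
    exact h1.eventually_lt_const (by simpa using half_pos hδ)
  have hrt : ∀ t ∈ closedBall (0 : ℂ) r, ‖t‖ * ‖e‖ < δ / 2 := fun t ht =>
    (mul_le_mul_of_nonneg_right (mem_closedBall_zero_iff.1 ht) he0.le).trans_lt hre
  have hJd : ∀ s t : ℂ, ‖s‖ * ‖v‖ < δ / 2 → t ∈ closedBall (0 : ℂ) r →
      DifferentiableAt ℂ J (q + s • v + t • e) := fun s t hs ht =>
    hJ.differentiableAt (hU.mem_nhds (hδU (hmem s t hs (hrt t ht))).1)
  have hex := eventually_exists_zero_of_continuous_family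
    (g := fun s t => J (q + s • v + t • e)) hr0
    (by
      filter_upwards [hsmall] with s hs
      refine DifferentiableOn.diffContOnCl fun t ht => ?_
      rw [closure_ball 0 hr0.ne'] at ht
      exact (DifferentiableAt.fun_comp' t (hJd s t hs ht) (by fun_prop)).differentiableWithinAt)
    (fun t ht => ContinuousAt.comp (g := J) (f := fun z : ℂ × ℂ => q + z.1 • v + z.2 • e)
      (hJd 0 t (by simpa using half_pos hδ) ht).continuousAt (by fun_prop))
    (by simpa using hJq)
    (by simpa using hrne)
  obtain ⟨σ, hσ, hσ'⟩ := Metric.eventually_nhds_iff_ball.1 (hex.and hsmall)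
  choose! τ hτ using fun s hs => (hσ' s hs).1
  set x : ℂ → E := fun s => q + s • v + τ s • e with hx
  have hxmem : ∀ s ∈ ball (0 : ℂ) σ, x s ∈ ball q δ := fun s hs =>
    hmem s (τ s) (hσ' s hs).2 (hrt _ (hτ s hs).1)
  have hxlip : ∀ s ∈ ball (0 : ℂ) σ, ∀ s' ∈ ball (0 : ℂ) σ,
      ‖x s' - x s‖ ≤ (‖v‖ + C * ‖e‖) * ‖s' - s‖ := by
    intro s hs s' hs'
    have h1 := hlip s' (τ s') s (τ s) (hxmem s' hs') (hxmem s hs) (hτ s' hs').2 (hτ s hs).2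
    have h2 : x s' - x s = (s' - s) • v + (τ s' - τ s) • e := by
      simp only [hx]
      rw [sub_smul, sub_smul]
      abel
    rw [h2]
    refine (norm_add_le _ _).trans ?_
    rw [norm_smul, norm_smul]
    nlinarith
  have hF : ∀ s ∈ ball (0 : ℂ) σ, HasDerivAt (f ∘ x) 0 s := by
    intro s hs
    have hfx : HasFDerivAt f (0 : E →L[ℂ] F) (x s) := by
      rw [← hJf _ (hδU (hxmem s hs)).1 (hτ s hs).2]
      exact (hf.differentiableAt (hU.mem_nhds (hδU (hxmem s hs)).1)).hasFDerivAt
    have hO : (fun s' => x s' - x s) =O[𝓝 s] fun s' => s' - s :=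
      Asymptotics.IsBigO.of_bound (‖v‖ + C * ‖e‖) (Filter.eventually_of_mem
        (isOpen_ball.mem_nhds hs) fun s' hs' => hxlip s hs s' hs')
    have hxc : Tendsto x (𝓝 s) (𝓝 (x s)) := by
      have h0 : Tendsto (fun s' => s' - s) (𝓝 s) (𝓝 0) := by
        have : ContinuousAt (fun s' : ℂ => s' - s) s := by fun_prop
        simpa [ContinuousAt] using this
      simpa using (hO.trans_tendsto h0).add_const (x s)
    rw [hasDerivAt_iff_isLittleO]
    have h1 := (hasFDerivAt_iff_isLittleO.1 hfx).comp_tendsto hxc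
    simpa [Function.comp_def] using h1.trans_isBigO hO
  have h0mem : (0 : ℂ) ∈ ball (0 : ℂ) σ := mem_ball_self hσ
  have h1mem : ((σ / 2 : ℝ) : ℂ) ∈ ball (0 : ℂ) σ := by
    rw [mem_ball_zero_iff, Complex.norm_real, Real.norm_of_nonneg (by positivity)]
    linarith
  have hconst := isOpen_ball.is_const_of_deriv_eq_zero (convex_ball (0 : ℂ) σ).isPreconnected
    (fun s hs => (hF s hs).differentiableAt.differentiableWithinAt)
    (fun s hs => (hF s hs).deriv) h1mem h0mem
  have hxx := hinj (hδU (hxmem _ h1mem)).1 (hδU (hxmem _ h0mem)).1 hconst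
  set a : ℂ := ((σ / 2 : ℝ) : ℂ) with ha
  have ha0 : a ≠ 0 := by
    rw [ha, Complex.ofReal_ne_zero]
    positivity
  have hav : a • v = (τ 0 - τ a) • e := by
    simp only [hx, zero_smul, zero_add, add_assoc, add_right_inj] at hxx
    rw [sub_smul, ← hxx]
    abel
  apply hv (a⁻¹ * (τ 0 - τ a))
  rw [mul_smul, ← hav, smul_smul, inv_mul_cancel₀ ha0, one_smul]

theorem differentiableOn_det_fderiv {E : Type*} [NormedAddCommGroup E] [NormedSpace ℂ E]
    [FiniteDimensional ℂ E] {f : E → E} {U : Set E} (hf : DifferentiableOn ℂ f U)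
    (hU : IsOpen U) :
    DifferentiableOn ℂ (fun x => LinearMap.det (fderiv ℂ f x : E →ₗ[ℂ] E)) U := by
  have : CompleteSpace E := FiniteDimensional.complete ℂ E
  set b := Module.finBasis ℂ E
  have hent : ∀ i j, DifferentiableOn ℂ
      (fun x => LinearMap.toMatrix b b (fderiv ℂ f x : E →ₗ[ℂ] E) i j) U := by
    intro i j
    have h1 : (fun x => LinearMap.toMatrix b b (fderiv ℂ f x : E →ₗ[ℂ] E) i j) =
        fun x => LinearMap.toContinuousLinearMap (b.coord i) (fderiv ℂ f x (b j)) := by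
      ext x
      simp [LinearMap.toMatrix_apply]
    rw [h1]
    exact (ContinuousLinearMap.differentiable _).comp_differentiableOn
      (differentiableOn_fderiv_apply hf hU (b j))
  simp_rw [← LinearMap.det_toMatrix b, Matrix.det_apply]
  refine DifferentiableOn.fun_sum fun σ _ => ?_
  refine DifferentiableOn.fun_const_smul ?_ _
  have hprod : ∀ s : Finset (Fin (Module.finrank ℂ E)), DifferentiableOn ℂ (fun x =>
      ∏ i ∈ s, LinearMap.toMatrix b b (fderiv ℂ f x : E →ₗ[ℂ] E) (σ i) i) U := by
    classical
    intro s
    induction s using Finset.induction_on with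
    | empty => simp
    | insert a s has ih =>
      simp_rw [Finset.prod_insert has]
      exact (hent _ _).mul ih
  exact hprod _

/-- The iterated directional derivative of `J` in the direction `e`. -/
noncomputable def iteratedDirDeriv {E : Type*} [NormedAddCommGroup E] [NormedSpace ℂ E]
    (J : E → ℂ) (e : E) : ℕ → E → ℂ
  | 0 => J
  | m + 1 => fun x => fderiv ℂ (iteratedDirDeriv J e m) x e

theorem differentiableOn_iteratedDirDeriv {E : Type*} [NormedAddCommGroup E] [NormedSpace ℂ E]
    {J : E → ℂ} {U : Set E} (hJ : DifferentiableOn ℂ J U) (hU : IsOpen U) (e : E) (m : ℕ) :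
    DifferentiableOn ℂ (iteratedDirDeriv J e m) U := by
  induction m with
  | zero => exact hJ
  | succ m ih => exact differentiableOn_fderiv_apply ih hU e

theorem iteratedDeriv_line_eq {E : Type*} [NormedAddCommGroup E] [NormedSpace ℂ E]
    {J : E → ℂ} {U : Set E} (hJ : DifferentiableOn ℂ J U) (hU : IsOpen U) (q e : E) (m : ℕ)
    {t : ℂ} (ht : q + t • e ∈ U) :
    iteratedDeriv m (fun t : ℂ => J (q + t • e)) t = iteratedDirDeriv J e m (q + t • e) := by
  induction m generalizing t with
  | zero => simp [iteratedDirDeriv]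
  | succ m ih =>
    rw [iteratedDeriv_succ]
    have hnear : ∀ᶠ s in 𝓝 t, q + s • e ∈ U :=
      ContinuousAt.eventually_mem (by fun_prop) (hU.mem_nhds ht)
    have h1 : iteratedDeriv m (fun t : ℂ => J (q + t • e)) =ᶠ[𝓝 t]
        fun s => iteratedDirDeriv J e m (q + s • e) := by
      filter_upwards [hnear] with s hs using ih hs
    rw [h1.deriv_eq]
    have h2 : HasDerivAt (fun s : ℂ => q + s • e) e t := by
      simpa using ((hasDerivAt_id t).smul_const e).const_add q
    exact (((differentiableOn_iteratedDirDeriv hJ hU e m).differentiableAt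
      (hU.mem_nhds ht)).hasFDerivAt.comp_hasDerivAt t h2).deriv

theorem eventually_line_eq_zero_iff {E : Type*} [NormedAddCommGroup E] [NormedSpace ℂ E]
    {J : E → ℂ} {U : Set E} (hJ : DifferentiableOn ℂ J U) (hU : IsOpen U) {q : E} (hq : q ∈ U)
    (e : E) :
    (∀ᶠ t in 𝓝 (0 : ℂ), J (q + t • e) = 0) ↔ ∀ m, iteratedDirDeriv J e m q = 0 := by
  have hnear : ∀ᶠ t in 𝓝 (0 : ℂ), q + t • e ∈ U :=
    ContinuousAt.eventually_mem (by fun_prop) (hU.mem_nhds (by simpa using hq))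
  have han : AnalyticAt ℂ (fun t : ℂ => J (q + t • e)) 0 := by
    rw [Complex.analyticAt_iff_eventually_differentiableAt]
    filter_upwards [hnear] with t ht
    exact DifferentiableAt.fun_comp' t (hJ.differentiableAt (hU.mem_nhds ht)) (by fun_prop)
  have hval : ∀ m, iteratedDeriv m (fun t : ℂ => J (q + t • e)) 0 = iteratedDirDeriv J e m q := by
    intro m
    rw [iteratedDeriv_line_eq hJ hU q e m (by simpa using hq)]
    simp
  rw [← analyticOrderAt_eq_top, ENat.eq_top_iff_forall_ge]
  simp_rw [natCast_le_analyticOrderAt_iff_iteratedDeriv_eq_zero han, hval]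
  exact ⟨fun h m => h (m + 1) m (Nat.lt_succ_self m), fun h m i _ => h i⟩

theorem not_injOn_of_fderiv_eq_zero_of_det_eq_zero {E : Type*} [NormedAddCommGroup E]
    [NormedSpace ℂ E] [FiniteDimensional ℂ E] (hdim : 2 ≤ Module.finrank ℂ E)
    {f : E → E} {U : Set E} (hU : IsOpen U) (hf : DifferentiableOn ℂ f U)
    (hdeg : ∀ x ∈ U, LinearMap.det (fderiv ℂ f x : E →ₗ[ℂ] E) = 0 → fderiv ℂ f x = 0)
    {p : E} (hp : p ∈ U) (hp0 : LinearMap.det (fderiv ℂ f p : E →ₗ[ℂ] E) = 0) :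
    ¬ InjOn f U := by
  intro hinj
  set J : E → ℂ := fun x => LinearMap.det (fderiv ℂ f x : E →ₗ[ℂ] E) with hJdef
  obtain ⟨R, hR, hRU⟩ := Metric.isOpen_iff.1 hU p hp
  have hfB : DifferentiableOn ℂ f (ball p R) := hf.mono hRU
  have hJB : DifferentiableOn ℂ J (ball p R) := (differentiableOn_det_fderiv hf hU).mono hRU
  have hpB : p ∈ ball p R := mem_ball_self hR
  by_cases hall : ∀ x ∈ ball p R, J x = 0
  · have : Nontrivial E := Module.nontrivial_of_finrank_pos (R := ℂ) (by omega)
    have : (𝓝[≠] p).NeBot := Module.punctured_nhds_neBot ℂ E p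
    have hfr : ∀ᶠ x in 𝓝[≠] p, x ∈ ball p R ∧ x ≠ p :=
      (eventually_nhdsWithin_of_eventually_nhds (isOpen_ball.eventually_mem hpB)).and
        self_mem_nhdsWithin
    obtain ⟨x, hx, hne⟩ := hfr.exists
    exact hne (hinj (hRU hx) hp (isOpen_ball.is_const_of_fderiv_eq_zero
      (convex_ball p R).isPreconnected hfB (fun z hz => hdeg z (hRU hz) (hall z hz)) hx hpB))
  push Not at hall
  obtain ⟨x₁, hx₁, hJx₁⟩ := hall
  set e := x₁ - p with he
  have hpe : ¬ ∀ᶠ t in 𝓝 (0 : ℂ), J (p + t • e) = 0 := by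
    intro hev
    set T : Set ℂ := {t | p + t • e ∈ ball p R} with hT
    have he0 : 0 < ‖e‖ := by
      rw [norm_pos_iff, he, sub_ne_zero]
      rintro rfl
      exact hJx₁ hp0
    have hTball : T = ball 0 (R / ‖e‖) := by
      ext t
      simp [hT, mem_ball, dist_eq_norm, norm_smul, lt_div_iff₀ he0]
    have hTo : IsOpen T := hTball ▸ isOpen_ball
    have hTc : IsPreconnected T := hTball ▸ (convex_ball _ _).isPreconnected
    have hTd : DifferentiableOn ℂ (fun t : ℂ => J (p + t • e)) T := fun t ht =>
      (DifferentiableAt.fun_comp' t (hJB.differentiableAt (isOpen_ball.mem_nhds ht))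
        (by fun_prop)).differentiableWithinAt
    have h0T : (0 : ℂ) ∈ T := by simpa [hT] using hR
    have h1T : (1 : ℂ) ∈ T := by simpa [hT, he] using mem_ball_iff_norm.1 hx₁
    have := (hTd.analyticOnNhd hTo).eqOn_zero_of_preconnected_of_eventuallyEq_zero hTc h0T hev h1T
    exact hJx₁ (by simpa [he] using this)
  have hP : ∃ m, ∃ q ∈ ball p R, J q = 0 ∧ iteratedDirDeriv J e m q ≠ 0 := by
    rw [eventually_line_eq_zero_iff hJB isOpen_ball hpB] at hpe
    push Not at hpe
    obtain ⟨m, hm⟩ := hpe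
    exact ⟨m, p, hpB, hp0, hm⟩
  classical
  obtain ⟨q, hqB, hJq, hDq⟩ := Nat.find_spec hP
  obtain ⟨m, hm⟩ : ∃ m, Nat.find hP = m + 1 := by
    refine Nat.exists_eq_succ_of_ne_zero fun h => ?_
    rw [h] at hDq
    exact hDq hJq
  have hmin : ∀ z ∈ ball p R, J z = 0 → iteratedDirDeriv J e m z = 0 := by
    intro z hz hJz
    by_contra hne
    exact Nat.find_min hP (by omega : m < Nat.find hP) ⟨z, hz, hJz, hne⟩
  rw [hm] at hDq
  have hGd := differentiableOn_iteratedDirDeriv hJB isOpen_ball e m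
  have hstrict := ((contDiffOn_of_differentiableOn_complex hGd isOpen_ball 1).contDiffAt
    (isOpen_ball.mem_nhds hqB)).hasStrictFDerivAt (by simp)
  obtain ⟨v, hv⟩ : ∃ v : E, ∀ t : ℂ, v ≠ t • e := by
    by_contra! hcon
    have := finrank_le_one e (fun w => (hcon w).imp fun t ht => ht.symm)
    omega
  refine not_injOn_of_fderiv_eq_zero_on_zeros isOpen_ball hfB hJB hqB hJq ?_
    (fun z hz h => hdeg z (hRU hz) h) hmin hstrict hDq hv (hinj.mono hRU)
  rw [eventually_line_eq_zero_iff hJB isOpen_ball hqB]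
  exact fun h => hDq (h (m + 1))

/-- If the derivative of an injective holomorphic map has a nontrivial kernel, then its restriction
to a suitable submanifold is an injective holomorphic map of a space of the dimension of that kernel
into itself whose derivative vanishes at a point. -/
theorem exists_injOn_fderiv_eq_zero {E : Type*} [NormedAddCommGroup E] [NormedSpace ℂ E]
    [FiniteDimensional ℂ E] {f : E → E} {U : Set E} (hU : IsOpen U) (hf : DifferentiableOn ℂ f U)
    (hinj : InjOn f U) {x : E} (hx : x ∈ U) :
    ∃ (K : Submodule ℂ E) (u : K → K) (V : Set K),
      Module.finrank ℂ K = Module.finrank ℂ (LinearMap.ker (fderiv ℂ f x : E →ₗ[ℂ] E)) ∧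
      IsOpen V ∧ 0 ∈ V ∧ DifferentiableOn ℂ u V ∧ InjOn u V ∧ fderiv ℂ u 0 = 0 := by
  have : CompleteSpace E := FiniteDimensional.complete ℂ E
  set A : E →ₗ[ℂ] E := (fderiv ℂ f x : E →ₗ[ℂ] E) with hA
  obtain ⟨K, hK⟩ := Submodule.exists_isCompl (LinearMap.range A)
  obtain ⟨N', hN'⟩ := Submodule.exists_isCompl (LinearMap.ker A)
  have hrank : Module.finrank ℂ K = Module.finrank ℂ (LinearMap.ker A) := by
    have h1 := LinearMap.finrank_range_add_finrank_ker A
    have h2 := Submodule.finrank_add_eq_of_isCompl hK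
    omega
  let e : LinearMap.ker A ≃ₗ[ℂ] K := LinearEquiv.ofFinrankEq _ _ hrank.symm
  let P : E →ₗ[ℂ] LinearMap.ker A := Submodule.projectionOnto _ _ hN'
  let Q₀ : E →ₗ[ℂ] K := Submodule.projectionOnto _ _ hK.symm
  let Q : E →L[ℂ] K := LinearMap.toContinuousLinearMap Q₀
  let B₀ : E →ₗ[ℂ] E := K.subtype ∘ₗ e.toLinearMap ∘ₗ P
  let B : E →L[ℂ] E := LinearMap.toContinuousLinearMap B₀
  have hQA : ∀ v, Q (A v) = 0 := fun v =>
    (Submodule.projectionOnto_apply_eq_zero_iff hK.symm).2 ⟨v, rfl⟩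
  have hQK : ∀ y : K, Q y = y := fun y => Submodule.projectionOnto_apply_left hK.symm y
  have hBK : ∀ v, B v = (e (P v) : E) := fun v => rfl
  have hDinj : Function.Injective (A + B₀) := by
    rw [← LinearMap.ker_eq_bot, LinearMap.ker_eq_bot']
    intro v hv
    have hv' : A v + (e (P v) : E) = 0 := hv
    have h1 : e (P v) = 0 := by
      have := congrArg Q hv'
      rwa [map_add, hQA, hQK, zero_add, map_zero] at this
    have h2 : P v = 0 := by simpa using h1
    rw [h1] at hv'
    have h3 : v ∈ LinearMap.ker A := by simpa using hv'
    have h4 : P v = ⟨v, h3⟩ := Submodule.projectionOnto_apply_of_mem_left hN' h3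
    rw [h2] at h4
    exact (congrArg Subtype.val h4).symm
  let D : E ≃L[ℂ] E := (LinearEquiv.ofInjectiveEndo (A + B₀) hDinj).toContinuousLinearEquiv
  have hDv : ∀ v, D v = A v + B v := fun v => rfl
  let Φ : E → E := fun z => f z - (Q (f z) : E) + B z
  have hfx : ContDiffAt ℂ 1 f x :=
    (contDiffOn_of_differentiableOn_complex hf hU 1).contDiffAt (hU.mem_nhds hx)
  have hΦc : ContDiffAt ℂ 1 Φ x :=
    (hfx.sub ((K.subtypeL ∘L Q).contDiff.contDiffAt.comp x hfx)).add B.contDiff.contDiffAt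
  have hfd : HasFDerivAt f (fderiv ℂ f x) x :=
    (hf.differentiableAt (hU.mem_nhds hx)).hasFDerivAt
  have hΦd : HasFDerivAt Φ (D : E →L[ℂ] E) x := by
    have h1 := (hfd.sub ((K.subtypeL ∘L Q).hasFDerivAt.comp x hfd)).add B.hasFDerivAt
    refine h1.congr_fderiv ?_
    ext v
    have h2 : Q (fderiv ℂ f x v) = 0 := hQA v
    have h3 : D v = fderiv ℂ f x v + B v := rfl
    simp [h2, h3]
  let Ψ : E → E := hΦc.localInverse hΦd one_ne_zero
  have hΨx : Ψ (Φ x) = x := hΦc.localInverse_apply_image hΦd one_ne_zero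
  have hΨc : ContDiffAt ℂ 1 Ψ (Φ x) := hΦc.to_localInverse hΦd one_ne_zero
  have hev : ∀ᶠ w in 𝓝 (Φ x), ContDiffAt ℂ 1 Ψ w ∧ Ψ w ∈ U ∧ Φ (Ψ w) = w := by
    refine (hΨc.eventually (by simp)).and (Filter.Eventually.and ?_ ?_)
    · exact hΨc.continuousAt.eventually_mem (hU.mem_nhds (by rwa [hΨx]))
    · exact (hΦc.hasStrictFDerivAt' hΦd one_ne_zero).eventually_right_inverse
  obtain ⟨W, hW, hWo, hxW⟩ := _root_.eventually_nhds_iff.1 hev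
  have hproj : ∀ z, Φ z - (Q (Φ z) : E) = f z - (Q (f z) : E) := by
    intro z
    have : Q (Φ z) = e (P z) := by
      simp only [Φ, map_add, map_sub, hQK, hBK, sub_self, zero_add]
    rw [this]
    simp only [Φ, hBK]
    abel
  have hud : ∀ y : K, Φ x + y ∈ W → DifferentiableAt ℂ (fun y : K => Q (f (Ψ (Φ x + y)))) y := by
    intro y hy
    have h1 : DifferentiableAt ℂ Ψ (Φ x + y) := (hW _ hy).1.differentiableAt one_ne_zero
    have h2 : DifferentiableAt ℂ f (Ψ (Φ x + y)) :=
      hf.differentiableAt (hU.mem_nhds (hW _ hy).2.1)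
    have h3 : DifferentiableAt ℂ (fun y : K => Φ x + (y : E)) y :=
      (K.subtypeL.differentiableAt).const_add _
    exact Q.differentiableAt.fun_comp' y (h2.fun_comp' y (h1.fun_comp' y h3))
  refine ⟨K, fun y => Q (f (Ψ (Φ x + y))), {y : K | Φ x + y ∈ W}, hrank,
    hWo.preimage (by fun_prop), by simpa using hxW,
    fun y hy => (hud y hy).differentiableWithinAt, ?_, ?_⟩
  · intro y₁ hy₁ y₂ hy₂ h
    have hkey : ∀ y : K, Φ x + y ∈ W → f (Ψ (Φ x + y)) =
        (Φ x - (Q (Φ x) : E)) + (Q (f (Ψ (Φ x + y))) : E) := by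
      intro y hy
      have h1 := hproj (Ψ (Φ x + y))
      rw [(hW _ hy).2.2, map_add, hQK] at h1
      push_cast at h1
      rw [← sub_eq_iff_eq_add, ← h1]
      abel
    have h2 : Ψ (Φ x + y₁) = Ψ (Φ x + y₂) := by
      refine hinj (hW _ hy₁).2.1 (hW _ hy₂).2.1 ?_
      rw [hkey _ hy₁, hkey _ hy₂]
      exact congrArg (fun w : K => (Φ x - (Q (Φ x) : E)) + (w : E)) h
    have h3 := congrArg Φ h2
    rw [(hW _ hy₁).2.2, (hW _ hy₂).2.2] at h3
    exact Subtype.ext (add_left_cancel h3)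
  · have h1 : HasFDerivAt (fun y : K => Φ x + (y : E)) K.subtypeL 0 :=
      K.subtypeL.hasFDerivAt.const_add _
    have h2 : HasFDerivAt Ψ (fderiv ℂ Ψ (Φ x)) (Φ x + ((0 : K) : E)) := by
      simpa using (hΨc.differentiableAt one_ne_zero).hasFDerivAt
    have h3 : HasFDerivAt f (fderiv ℂ f x) (Ψ (Φ x + ((0 : K) : E))) := by
      simpa [hΨx] using hfd
    have h4 := Q.hasFDerivAt.comp (0 : K) (h3.comp (0 : K) (h2.comp (0 : K) h1))
    have h5 := h4.fderiv
    refine h5.trans ?_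
    ext v
    exact congrArg Subtype.val (hQA (fderiv ℂ Ψ (Φ x) v))

theorem fderiv_ne_zero_of_injOn_of_finrank_eq_one {E : Type*} [NormedAddCommGroup E]
    [NormedSpace ℂ E] [FiniteDimensional ℂ E] (hdim : Module.finrank ℂ E = 1) {f : E → E}
    {U : Set E} (hU : IsOpen U) (hf : DifferentiableOn ℂ f U) (hinj : InjOn f U) {x : E}
    (hx : x ∈ U) : fderiv ℂ f x ≠ 0 := by
  intro h0
  let L : E ≃L[ℂ] ℂ := ContinuousLinearEquiv.ofFinrankEq (by simpa using hdim)
  have hmem : L x ∈ L.symm ⁻¹' U := by simpa using hx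
  refine deriv_ne_zero_of_injOn_complex (f := fun t => L (f (L.symm t))) (U := L.symm ⁻¹' U) ?_
    (hU.preimage L.symm.continuous) ?_ hmem ?_
  · exact L.differentiable.comp_differentiableOn
      (hf.comp L.symm.differentiable.differentiableOn fun t ht => ht)
  · intro s hs t ht h
    exact L.symm.injective (hinj hs ht (L.injective h))
  · have h1 : HasFDerivAt f (fderiv ℂ f x) (L.symm (L x)) := by
      simpa using (hf.differentiableAt (hU.mem_nhds hx)).hasFDerivAt
    have h2 := L.hasFDerivAt.comp (L x) (h1.comp (L x) L.symm.hasFDerivAt)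
    rw [h0] at h2
    have h3 := h2.hasDerivAt.deriv
    refine h3.trans ?_
    simp

/-- **Osgood's theorem**: an injective holomorphic map between open subsets of a finite dimensional
complex space has invertible derivative at every point. -/
theorem det_fderiv_ne_zero_of_injOn {E : Type*} [NormedAddCommGroup E] [NormedSpace ℂ E]
    [FiniteDimensional ℂ E] {f : E → E} {U : Set E} (hU : IsOpen U) (hf : DifferentiableOn ℂ f U)
    (hinj : InjOn f U) {x : E} (hx : x ∈ U) :
    LinearMap.det (fderiv ℂ f x : E →ₗ[ℂ] E) ≠ 0 := by
  induction hn : Module.finrank ℂ E using Nat.strong_induction_on generalizing E with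
  | _ n ih =>
  subst hn
  have hker : ∀ z ∈ U, LinearMap.det (fderiv ℂ f z : E →ₗ[ℂ] E) = 0 → fderiv ℂ f z = 0 := by
    intro z hz hdet
    by_contra hne
    obtain ⟨K, u, V, hK, hV, h0, hu, huinj, hu0⟩ := exists_injOn_fderiv_eq_zero hU hf hinj hz
    have hbot := LinearMap.bot_lt_ker_of_det_eq_zero hdet
    have hpos : 0 < Module.finrank ℂ K := by
      rw [hK]
      exact Nat.pos_of_ne_zero fun h => hbot.ne' (Submodule.finrank_eq_zero.1 h)
    have hlt : Module.finrank ℂ K < Module.finrank ℂ E := by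
      rw [hK]
      refine Submodule.finrank_lt fun h => hne ?_
      ext v
      have : v ∈ LinearMap.ker (fderiv ℂ f z : E →ₗ[ℂ] E) := h ▸ Submodule.mem_top
      simpa using this
    refine ih _ hlt hV hu huinj h0 rfl ?_
    rw [hu0]
    have : Nontrivial K := Module.nontrivial_of_finrank_pos hpos
    simp
  intro hdet
  rcases Nat.lt_or_ge (Module.finrank ℂ E) 2 with h | h
  · have h01 : Module.finrank ℂ E = 0 ∨ Module.finrank ℂ E = 1 := by omega
    rcases h01 with h | h
    · rw [LinearMap.det_eq_one_of_finrank_eq_zero h] at hdet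
      exact one_ne_zero hdet
    · exact fderiv_ne_zero_of_injOn_of_finrank_eq_one h hU hf hinj hx (hker x hx hdet)
  · exact not_injOn_of_fderiv_eq_zero_of_det_eq_zero h hU hf hker hx hdet hinj

theorem hasFDerivAt_invFunOn_of_injOn {E : Type*} [NormedAddCommGroup E] [NormedSpace ℂ E]
    [FiniteDimensional ℂ E] {f : E → E} {U : Set E} (hU : IsOpen U) (hf : DifferentiableOn ℂ f U)
    (hinj : InjOn f U) {x : E} (hx : x ∈ U) :
    ∃ D : E ≃L[ℂ] E, (D : E →L[ℂ] E) = fderiv ℂ f x ∧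
      HasFDerivAt (Function.invFunOn f U) (D.symm : E →L[ℂ] E) (f x) := by
  have : CompleteSpace E := FiniteDimensional.complete ℂ E
  let D : E ≃L[ℂ] E :=
    (LinearMap.equivOfDetNeZero _ (det_fderiv_ne_zero_of_injOn hU hf hinj hx)).toContinuousLinearEquiv
  have hD : (D : E →L[ℂ] E) = fderiv ℂ f x := by
    ext v
    rfl
  have hs : HasStrictFDerivAt f (D : E →L[ℂ] E) x := by
    rw [hD]
    exact ((contDiffOn_of_differentiableOn_complex hf hU 1).contDiffAt
      (hU.mem_nhds hx)).hasStrictFDerivAt (by simp)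
  refine ⟨D, hD, (hs.to_local_left_inverse ?_).hasFDerivAt⟩
  filter_upwards [hU.mem_nhds hx] with z hz using hinj.leftInvOn_invFunOn hz

theorem bddBelow_kobayashi_set {E : Type*} [NormedAddCommGroup E] [NormedSpace ℂ E]
    (Ω : Set E) (p ζ : E) :
    BddBelow {α : ℝ | 0 < α ∧ ∃ φ : ℂ → E, DifferentiableOn ℂ φ (ball 0 1) ∧
      (∀ τ ∈ ball (0 : ℂ) 1, φ τ ∈ Ω) ∧ φ 0 = p ∧ α • deriv φ 0 = ζ} :=
  ⟨0, fun _ h => h.1.le⟩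

theorem nonempty_kobayashi_set {E : Type*} [NormedAddCommGroup E] [NormedSpace ℂ E]
    {Ω : Set E} (hΩ : IsOpen Ω) {p : E} (hp : p ∈ Ω) (ζ : E) :
    {α : ℝ | 0 < α ∧ ∃ φ : ℂ → E, DifferentiableOn ℂ φ (ball 0 1) ∧
      (∀ τ ∈ ball (0 : ℂ) 1, φ τ ∈ Ω) ∧ φ 0 = p ∧ α • deriv φ 0 = ζ}.Nonempty := by
  obtain ⟨R, hR, hRΩ⟩ := Metric.isOpen_iff.1 hΩ p hp
  have hs : 0 < R / (‖ζ‖ + 1) := by positivity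
  refine ⟨(R / (‖ζ‖ + 1))⁻¹, inv_pos.2 hs, fun τ => p + τ • ((R / (‖ζ‖ + 1)) • ζ), by fun_prop,
    fun τ hτ => hRΩ ?_, by simp, ?_⟩
  · rw [mem_ball_zero_iff] at hτ
    rw [mem_ball_iff_norm, add_sub_cancel_left, norm_smul, norm_smul, Real.norm_of_nonneg hs.le]
    have h1 : R / (‖ζ‖ + 1) * ‖ζ‖ < R := by
      rw [div_mul_eq_mul_div, div_lt_iff₀ (by positivity)]
      linarith
    have h2 : 0 ≤ R / (‖ζ‖ + 1) * ‖ζ‖ := by positivity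
    nlinarith [norm_nonneg τ]
  · have : HasDerivAt (fun τ : ℂ => p + τ • ((R / (‖ζ‖ + 1)) • ζ)) ((R / (‖ζ‖ + 1)) • ζ) 0 := by
      simpa using ((hasDerivAt_id (0 : ℂ)).smul_const ((R / (‖ζ‖ + 1)) • ζ)).const_add p
    rw [this.deriv, smul_smul, inv_mul_cancel₀ hs.ne', one_smul]

/-- A holomorphic map into the unit ball sends the indicatrix into the unit ball. -/
theorem norm_fderiv_lt_one_of_mem_indicatrix {E F : Type*} [NormedAddCommGroup E]
    [NormedSpace ℂ E] [NormedAddCommGroup F] [NormedSpace ℂ F] {Ω : Set E} (hΩ : IsOpen Ω) {p : E}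
    (hp : p ∈ Ω) {f : E → F} (hf : DifferentiableOn ℂ f Ω) (hfp : f p = 0)
    (hmaps : f '' Ω ⊆ ball 0 1) {ζ : E} (hζ : ζ ∈ indicatrix Ω p) : ‖fderiv ℂ f p ζ‖ < 1 := by
  obtain ⟨α, ⟨hα, φ, hφ, hφΩ, hφ0, rfl⟩, hα1⟩ :=
    exists_lt_of_csInf_lt (nonempty_kobayashi_set hΩ hp ζ) hζ
  have h0 : (0 : ℂ) ∈ ball (0 : ℂ) 1 := mem_ball_self one_pos
  have hd : HasDerivAt (fun τ => f (φ τ)) (fderiv ℂ f p (deriv φ 0)) 0 := by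
    have h1 : HasFDerivAt f (fderiv ℂ f p) (φ 0) := by
      rw [hφ0]
      exact (hf.differentiableAt (hΩ.mem_nhds hp)).hasFDerivAt
    exact h1.comp_hasDerivAt 0 (hφ.differentiableAt (isOpen_ball.mem_nhds h0)).hasDerivAt
  have hle : ‖deriv (fun τ => f (φ τ)) 0‖ ≤ 1 := by
    refine Complex.norm_deriv_le_one_of_mapsTo_ball (hf.comp hφ hφΩ) ?_ one_pos
    intro τ hτ
    simp only [hφ0, hfp]
    exact ball_subset_closedBall (hmaps (mem_image_of_mem f (hφΩ τ hτ)))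
  rw [hd.deriv] at hle
  rw [ContinuousLinearMap.map_smul_of_tower, norm_smul, Real.norm_of_nonneg hα.le]
  nlinarith [norm_nonneg (fderiv ℂ f p (deriv φ 0))]

/-- If the image of a holomorphic embedding contains the ball of radius `r`, then its derivative
maps the indicatrix onto a set containing that ball. -/
theorem mem_indicatrix_of_norm_fderiv_lt {E : Type*} [NormedAddCommGroup E] [NormedSpace ℂ E]
    [FiniteDimensional ℂ E] {Ω : Set E} (hΩ : IsOpen Ω) {p : E} (hp : p ∈ Ω) {f : E → E}
    (hf : DifferentiableOn ℂ f Ω) (hinj : InjOn f Ω) (hfp : f p = 0) {r : ℝ} (hr : 0 < r)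
    (hball : ball 0 r ⊆ f '' Ω) {v : E} (hv : ‖fderiv ℂ f p v‖ < r) : v ∈ indicatrix Ω p := by
  obtain ⟨a, ha, ha1⟩ := exists_between ((div_lt_one hr).2 hv)
  have ha0 : 0 < a := (by positivity : 0 ≤ ‖fderiv ℂ f p v‖ / r).trans_lt ha
  rw [div_lt_iff₀ hr] at ha
  refine lt_of_le_of_lt (csInf_le (bddBelow_kobayashi_set Ω p v) ?_) ha1
  set g := Function.invFunOn f Ω with hg
  set w := a⁻¹ • fderiv ℂ f p v with hw
  have hwr : ‖w‖ < r := by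
    rw [hw, norm_smul, Real.norm_of_nonneg (inv_pos.2 ha0).le, inv_mul_lt_iff₀ ha0]
    exact ha
  have hτw : ∀ τ ∈ ball (0 : ℂ) 1, τ • w ∈ f '' Ω := by
    intro τ hτ
    refine hball ?_
    rw [mem_ball_zero_iff] at hτ ⊢
    rw [norm_smul]
    nlinarith [norm_nonneg w, norm_nonneg τ]
  have hline : ∀ τ : ℂ, HasDerivAt (fun τ : ℂ => τ • w) w τ := fun τ => by
    simpa using (hasDerivAt_id τ).smul_const w
  have hgf : ∀ z ∈ Ω, g (f z) = z := fun z hz => hinj.leftInvOn_invFunOn hz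
  refine ⟨ha0, fun τ => g (τ • w), ?_, ?_, ?_, ?_⟩
  · intro τ hτ
    obtain ⟨z, hz, hzw⟩ := hτw τ hτ
    obtain ⟨D, -, hD⟩ := hasFDerivAt_invFunOn_of_injOn hΩ hf hinj hz
    rw [hzw] at hD
    exact (hD.comp_hasDerivAt τ (hline τ)).differentiableAt.differentiableWithinAt
  · intro τ hτ
    obtain ⟨z, hz, hzw⟩ := hτw τ hτ
    simp only [← hzw, hgf z hz, hz]
  · simp only [zero_smul, ← hfp, hgf p hp]
  · obtain ⟨D, hDf, hD⟩ := hasFDerivAt_invFunOn_of_injOn hΩ hf hinj hp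
    rw [hfp, ← zero_smul ℂ w] at hD
    have hgd : deriv (fun τ : ℂ => g (τ • w)) 0 = D.symm w :=
      (HasFDerivAt.comp_hasDerivAt (f := fun τ : ℂ => τ • w) 0 hD (hline 0)).deriv
    have hDw : w = D (a⁻¹ • v) := by
      rw [hw, ← hDf]
      exact ((D : E →L[ℂ] E).map_smul_of_tower a⁻¹ v).symm
    rw [hgd, hDw, D.symm_apply_apply, smul_smul, mul_inv_cancel₀ ha0.ne', one_smul]

end

theorem squeezing_upper_bound (n : ℕ) (hn : 2 ≤ n)
    (Ω : Set (EuclideanSpace ℂ (Fin n))) (hopen : IsOpen Ω)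
    (hbdd : Bornology.IsBounded Ω) (p : EuclideanSpace ℂ (Fin n)) (hp : p ∈ Ω)
    (ζ₁ ζ₂ : EuclideanSpace ℂ (Fin n))
    (hζ₁ : ζ₁ ∈ indicatrix Ω p) (hζ₂ : ζ₂ ∈ indicatrix Ω p)
    (ε : ℝ) (hε : 0 < ε) (hout : (ε : ℂ) • (ζ₁ + ζ₂) ∉ indicatrix Ω p) :
    squeezing Ω p ≤ 3 * ε := by
  refine Real.sSup_le ?_ (by positivity)
  rintro r ⟨hr, f, hf, hinj, hfp, hmaps, hball⟩
  by_contra! hlt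
  refine hout (mem_indicatrix_of_norm_fderiv_lt hopen hp hf hinj hfp hr hball ?_)
  have h₁ := norm_fderiv_lt_one_of_mem_indicatrix hopen hp hf hfp hmaps hζ₁
  have h₂ := norm_fderiv_lt_one_of_mem_indicatrix hopen hp hf hfp hmaps hζ₂
  rw [map_smul, map_add, norm_smul, Complex.norm_of_nonneg hε.le]
  nlinarith [norm_add_le (fderiv ℂ f p ζ₁) (fderiv ℂ f p ζ₂)]
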